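/- arXiv:2407.20655 — 2 statements merged into one kernel-verified Lean document; each statement's English description precedes it below -/
import Mathlib

section
/- (Robust inf-sup stability of the symmetric formulation, Lemma 5.3.) For every admissible pair (χ,w), the pair (χ,−w) is admissible, |||(χ,−w)|||_{eg,θ} = |||(χ,w)|||_{eg,θ}, and B_{sym,θ}((χ,w),(χ,−w)) = |||(χ,w)|||_{eg,θ}². Consequently, for every admissible (χ,w) with |||(χ,w)|||_{eg,θ} ≠ 0, the supremum over admissible pairs (τ,v) with |||(τ,v)|||_{eg,θ} ≠ 0 of B_{sym,θ}((χ,w),(τ,v)) / |||(τ,v)|||_{eg,θ} is at least |||(χ,w)|||_{eg,θ}. -/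
/-! Changing the sign of the velocity flips `jac` and `epsV`, so the energy norm and
admissibility, which are quadratic in the velocity, are unaffected. In `Bsym` tested with
`(χ, -w)` the two terms `∓2 ∫ ⟨ε(w), χ⟩` cancel, as do `∓∫ ⟨Aχ, ε(w)⟩`; the `ν`-term turns
into `+∫ ν |ε(w)|²`, and `⟨Aχ, χ⟩ = |Aχ|²` because `A` is an orthogonal projection
(`fro_devM_self`). This leaves exactly the squared energy norm, and the supremum bound follows
by testing with `(χ, -w)`. All cancellations are between identical integrals, so no
integrability is required for them. -/

open MeasureTheory

noncomputable section

/-- Frobenius inner product of two `d × d` arrays. -/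
def fro {d : ℕ} (S T : Fin d → Fin d → ℝ) : ℝ := ∑ i, ∑ j, S i j * T i j

/-- The deviatoric map `A M = M − (tr M / d) • I`. -/
def devM {d : ℕ} (M : Fin d → Fin d → ℝ) : Fin d → Fin d → ℝ :=
  fun i j => M i j - ((∑ k, M k k) / (d : ℝ)) * (if i = j then 1 else 0)

/-- Partial derivative of a scalar field in the `j`-th coordinate direction. -/
def pd {d : ℕ} (f : (Fin d → ℝ) → ℝ) (x : Fin d → ℝ) (j : Fin d) : ℝ :=
  fderiv ℝ f x (Pi.single j 1)

/-- Jacobian matrix `(∂v_i/∂x_j)` of a vector field. -/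
def jac {d : ℕ} (v : (Fin d → ℝ) → Fin d → ℝ) (x : Fin d → ℝ) : Fin d → Fin d → ℝ :=
  fun i j => pd (fun y => v y i) x j

/-- Symmetric gradient `ε(v) = (∇v + (∇v)^T)/2`. -/
def epsV {d : ℕ} (v : (Fin d → ℝ) → Fin d → ℝ) (x : Fin d → ℝ) : Fin d → Fin d → ℝ :=
  fun i j => (jac v x i j + jac v x j i) / 2

/-- Row-wise divergence `(∇·τ)_i = Σ_j ∂_j τ_{ij}` of a matrix-valued field. -/
def divT {d : ℕ} (τ : (Fin d → ℝ) → Fin d → Fin d → ℝ) (x : Fin d → ℝ) (i : Fin d) : ℝ :=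
  ∑ j, pd (fun y => τ y i j) x j

/-- A pair `(τ, v)` is admissible: `τ` is `C¹` on `Ω`, `v` is `C¹` with compact
support contained in `Ω`, and the four weighted integrals are finite. -/
def Admissible {d : ℕ} (Ω : Set (Fin d → ℝ)) (ν θ : (Fin d → ℝ) → ℝ)
    (τ : (Fin d → ℝ) → Fin d → Fin d → ℝ) (v : (Fin d → ℝ) → Fin d → ℝ) : Prop :=
  (∀ i j, ContDiffOn ℝ 1 (fun x => τ x i j) Ω) ∧
    ContDiff ℝ 1 v ∧ HasCompactSupport v ∧ tsupport v ⊆ Ω ∧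
    IntegrableOn (fun x => (ν x)⁻¹ * fro (τ x) (τ x)) Ω ∧
    IntegrableOn (fun x => ν x * fro (jac v x) (jac v x)) Ω ∧
    IntegrableOn (fun x => (ν x / θ x) * ∑ i, (v x i) ^ 2) Ω ∧
    IntegrableOn (fun x => (θ x / ν x) * ∑ i, (divT τ x i) ^ 2) Ω

/-- The augmented (non-symmetric) bilinear form `B_θ`. -/
def Bform {d : ℕ} (Ω : Set (Fin d → ℝ)) (ν θ : (Fin d → ℝ) → ℝ)
    (χ : (Fin d → ℝ) → Fin d → Fin d → ℝ) (w : (Fin d → ℝ) → Fin d → ℝ)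
    (τ : (Fin d → ℝ) → Fin d → Fin d → ℝ) (v : (Fin d → ℝ) → Fin d → ℝ) : ℝ :=
  (∫ x in Ω, (ν x)⁻¹ * fro (devM (χ x)) (τ x))
    - 2 * (∫ x in Ω, fro (epsV w x) (τ x))
    + 2 * (∫ x in Ω, fro (epsV v x) (χ x))
    - (∫ x in Ω, fro (devM (χ x)) (epsV v x))
    + (∫ x in Ω, fro (devM (τ x)) (epsV w x))
    + (∫ x in Ω, ν x * fro (epsV w x) (epsV v x))
    + (∫ x in Ω, (θ x / ν x) * ∑ i, divT χ x i * divT τ x i)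

/-- The weighted energy norm `|||(τ,v)|||_{eg,θ}`. -/
def normEg {d : ℕ} (Ω : Set (Fin d → ℝ)) (ν θ : (Fin d → ℝ) → ℝ)
    (τ : (Fin d → ℝ) → Fin d → Fin d → ℝ) (v : (Fin d → ℝ) → Fin d → ℝ) : ℝ :=
  Real.sqrt ((∫ x in Ω, ν x * fro (epsV v x) (epsV v x))
    + (∫ x in Ω, (ν x)⁻¹ * fro (devM (τ x)) (devM (τ x)))
    + (∫ x in Ω, (θ x / ν x) * ∑ i, (divT τ x i) ^ 2))

/-- The weighted full norm `|||(τ,v)|||_{full,θ}`. -/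
def normFull {d : ℕ} (Ω : Set (Fin d → ℝ)) (ν θ : (Fin d → ℝ) → ℝ)
    (τ : (Fin d → ℝ) → Fin d → Fin d → ℝ) (v : (Fin d → ℝ) → Fin d → ℝ) : ℝ :=
  Real.sqrt ((∫ x in Ω, ν x * fro (jac v x) (jac v x))
    + (∫ x in Ω, (ν x / θ x) * ∑ i, (v x i) ^ 2)
    + (∫ x in Ω, (ν x)⁻¹ * fro (τ x) (τ x))
    + (∫ x in Ω, (θ x / ν x) * ∑ i, (divT τ x i) ^ 2))

/-- The symmetric augmented bilinear form `B_{sym,θ}`. -/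
def Bsym {d : ℕ} (Ω : Set (Fin d → ℝ)) (ν θ : (Fin d → ℝ) → ℝ)
    (χ : (Fin d → ℝ) → Fin d → Fin d → ℝ) (w : (Fin d → ℝ) → Fin d → ℝ)
    (τ : (Fin d → ℝ) → Fin d → Fin d → ℝ) (v : (Fin d → ℝ) → Fin d → ℝ) : ℝ :=
  (∫ x in Ω, (ν x)⁻¹ * fro (devM (χ x)) (τ x))
    - 2 * (∫ x in Ω, fro (epsV w x) (τ x))
    - 2 * (∫ x in Ω, fro (epsV v x) (χ x))
    + (∫ x in Ω, fro (devM (χ x)) (epsV v x))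
    + (∫ x in Ω, fro (devM (τ x)) (epsV w x))
    - (∫ x in Ω, ν x * fro (epsV w x) (epsV v x))
    + (∫ x in Ω, (θ x / ν x) * ∑ i, divT χ x i * divT τ x i)

lemma jac_neg {d : ℕ} (v : (Fin d → ℝ) → Fin d → ℝ) (x : Fin d → ℝ) :
    jac (-v) x = -jac v x := by
  funext i j
  change fderiv ℝ (-(fun y => v y i)) x (Pi.single j 1)
    = -fderiv ℝ (fun y => v y i) x (Pi.single j 1)
  rw [fderiv_neg]
  rfl

lemma epsV_neg {d : ℕ} (v : (Fin d → ℝ) → Fin d → ℝ) (x : Fin d → ℝ) :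
    epsV (-v) x = -epsV v x := by
  funext i j
  simp only [epsV, jac_neg, Pi.neg_apply]
  ring

lemma fro_neg_left {d : ℕ} (S T : Fin d → Fin d → ℝ) : fro (-S) T = -fro S T := by
  simp [fro]

lemma fro_neg_right {d : ℕ} (S T : Fin d → Fin d → ℝ) : fro S (-T) = -fro S T := by
  simp [fro]

lemma fro_self_nonneg {d : ℕ} (S : Fin d → Fin d → ℝ) : 0 ≤ fro S S :=
  Finset.sum_nonneg fun i _ => Finset.sum_nonneg fun j _ => mul_self_nonneg (S i j)

lemma trace_devM {d : ℕ} (M : Fin d → Fin d → ℝ) : ∑ k, devM M k k = 0 := by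
  rcases Nat.eq_zero_or_pos d with rfl | hd
  · simp
  · have hd' : (d : ℝ) ≠ 0 := by positivity
    simp only [devM, Finset.sum_sub_distrib, if_true, mul_one, Finset.sum_const,
      Finset.card_univ, Fintype.card_fin, nsmul_eq_mul]
    field_simp
    ring

/-- The deviatoric map is an orthogonal projection: `A M` is trace-free, hence orthogonal to
`M - A M`, a multiple of the identity. -/
lemma fro_devM_self {d : ℕ} (M : Fin d → Fin d → ℝ) :
    fro (devM M) M = fro (devM M) (devM M) := by
  have hM : ∀ i j, M i j
      = devM M i j + ((∑ k, M k k) / (d : ℝ)) * (if i = j then 1 else 0) := by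
    intro i j
    simp [devM]
  have hsplit : fro (devM M) M
      = fro (devM M) (devM M) + (∑ k, devM M k k) * ((∑ k, M k k) / (d : ℝ)) := by
    unfold fro
    rw [Finset.sum_mul, ← Finset.sum_add_distrib]
    refine Finset.sum_congr rfl fun i _ => ?_
    calc ∑ j, devM M i j * M i j
        = ∑ j, (devM M i j * devM M i j
            + if i = j then devM M i j * ((∑ k, M k k) / (d : ℝ)) else 0) := by
          refine Finset.sum_congr rfl fun j _ => ?_
          conv_lhs => rw [hM i j]
          split_ifs <;> ring
      _ = _ := by simp [Finset.sum_add_distrib]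
  rw [hsplit, trace_devM, zero_mul, add_zero]

lemma normEg_neg {d : ℕ} (Ω : Set (Fin d → ℝ)) (ν θ : (Fin d → ℝ) → ℝ)
    (χ : (Fin d → ℝ) → Fin d → Fin d → ℝ) (w : (Fin d → ℝ) → Fin d → ℝ) :
    normEg Ω ν θ χ (-w) = normEg Ω ν θ χ w := by
  simp only [normEg, epsV_neg, fro_neg_left, fro_neg_right, neg_neg]

lemma Admissible.neg_right {d : ℕ} {Ω : Set (Fin d → ℝ)} {ν θ : (Fin d → ℝ) → ℝ}
    {χ : (Fin d → ℝ) → Fin d → Fin d → ℝ} {w : (Fin d → ℝ) → Fin d → ℝ}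
    (h : Admissible Ω ν θ χ w) : Admissible Ω ν θ χ (-w) := by
  obtain ⟨h1, h2, h3, h4, h5, h6, h7, h8⟩ := h
  have hsupp : tsupport (-w) = tsupport w := by
    simp only [tsupport, Function.support_neg]
  refine ⟨h1, h2.neg, ?_, ?_, h5, ?_, ?_, h8⟩
  · rw [HasCompactSupport, hsupp]
    exact h3
  · rw [hsupp]
    exact h4
  · simpa only [jac_neg, fro_neg_left, fro_neg_right, neg_neg] using h6
  · simpa only [Pi.neg_apply, neg_sq] using h7

/-- Positivity of the weights on `Ω` makes the radicand in `normEg` nonnegative, so that squaring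
undoes the square root. -/
lemma normEg_sq {d : ℕ} {Ω : Set (Fin d → ℝ)} (hΩ : MeasurableSet Ω)
    {ν θ : (Fin d → ℝ) → ℝ} (hν : ∀ x ∈ Ω, 0 ≤ ν x) (hθ : ∀ x ∈ Ω, 0 ≤ θ x)
    (χ : (Fin d → ℝ) → Fin d → Fin d → ℝ) (w : (Fin d → ℝ) → Fin d → ℝ) :
    normEg Ω ν θ χ w ^ 2 = (∫ x in Ω, ν x * fro (epsV w x) (epsV w x))
      + (∫ x in Ω, (ν x)⁻¹ * fro (devM (χ x)) (devM (χ x)))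
      + (∫ x in Ω, (θ x / ν x) * ∑ i, (divT χ x i) ^ 2) := by
  refine Real.sq_sqrt (add_nonneg (add_nonneg ?_ ?_) ?_)
  · exact setIntegral_nonneg hΩ fun x hx => mul_nonneg (hν x hx) (fro_self_nonneg _)
  · exact setIntegral_nonneg hΩ fun x hx =>
      mul_nonneg (inv_nonneg.2 (hν x hx)) (fro_self_nonneg _)
  · exact setIntegral_nonneg hΩ fun x hx =>
      mul_nonneg (div_nonneg (hθ x hx) (hν x hx)) (Finset.sum_nonneg fun i _ => sq_nonneg _)

lemma Bsym_neg_self {d : ℕ} (Ω : Set (Fin d → ℝ)) (ν θ : (Fin d → ℝ) → ℝ)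
    (χ : (Fin d → ℝ) → Fin d → Fin d → ℝ) (w : (Fin d → ℝ) → Fin d → ℝ) :
    Bsym Ω ν θ χ w χ (-w) = (∫ x in Ω, ν x * fro (epsV w x) (epsV w x))
      + (∫ x in Ω, (ν x)⁻¹ * fro (devM (χ x)) (devM (χ x)))
      + (∫ x in Ω, (θ x / ν x) * ∑ i, (divT χ x i) ^ 2) := by
  simp only [Bsym, epsV_neg, fro_neg_left, fro_neg_right, mul_neg, integral_neg,
    fro_devM_self, ← pow_two]
  ring

/-- Robust inf-sup stability of the symmetric formulation,
Lemma 5.3: `(χ,−w)` is admissible, has the same energy norm as `(χ,w)`,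
`B_{sym,θ}((χ,w),(χ,−w)) = |||(χ,w)|||²_{eg,θ}`, and consequently the supremum
of `B_{sym,θ}((χ,w),(τ,v))/|||(τ,v)|||_{eg,θ}` over admissible pairs with
nonzero energy norm is at least `|||(χ,w)|||_{eg,θ}`. -/
theorem stmt_9 (d : ℕ) (Ω : Set (Fin d → ℝ)) (hΩ : IsOpen Ω)
    (ν θ : (Fin d → ℝ) → ℝ) (hνmeas : Measurable ν) (hθmeas : Measurable θ)
    (lam Lam θ₀ θ₁ : ℝ) (hlam : 0 < lam) (hνbd : ∀ x ∈ Ω, lam ≤ ν x ∧ ν x ≤ Lam)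
    (hθ₀ : 0 < θ₀) (hθbd : ∀ x ∈ Ω, θ₀ ≤ θ x ∧ θ x ≤ θ₁)
    (χ : (Fin d → ℝ) → Fin d → Fin d → ℝ) (w : (Fin d → ℝ) → Fin d → ℝ)
    (hadm : Admissible Ω ν θ χ w) :
    Admissible Ω ν θ χ (-w) ∧
      normEg Ω ν θ χ (-w) = normEg Ω ν θ χ w ∧
      Bsym Ω ν θ χ w χ (-w) = (normEg Ω ν θ χ w) ^ 2 ∧
      (normEg Ω ν θ χ w ≠ 0 →
        ∃ τ v, Admissible Ω ν θ τ v ∧ normEg Ω ν θ τ v ≠ 0 ∧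
          normEg Ω ν θ χ w ≤ Bsym Ω ν θ χ w τ v / normEg Ω ν θ τ v) := by
  have hB : Bsym Ω ν θ χ w χ (-w) = (normEg Ω ν θ χ w) ^ 2 := by
    rw [Bsym_neg_self, normEg_sq hΩ.measurableSet
      (fun x hx => hlam.le.trans (hνbd x hx).1) (fun x hx => hθ₀.le.trans (hθbd x hx).1)]
  refine ⟨hadm.neg_right, normEg_neg Ω ν θ χ w, hB, fun h0 => ?_⟩
  refine ⟨χ, -w, hadm.neg_right, ?_, ?_⟩
  · rwa [normEg_neg]
  · rw [normEg_neg, hB, pow_two, mul_div_cancel_right₀ _ h0]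
end
end

section
/- (Robust Céa-type estimate, Theorem 6.1.) Let S be an ℝ-linear subspace of the space of admissible pairs. Let (σ,u) be an admissible pair, let (σ_h,u_h) ∈ S, and assume the Galerkin orthogonality B_θ((σ−σ_h, u−u_h),(ρ,z)) = 0 for every (ρ,z) ∈ S. Then for every (τ_h,v_h) ∈ S: |||(σ−σ_h, u−u_h)|||_{eg,θ} ≤ 2 |||(σ−τ_h, u−v_h)|||_{full,θ}; in particular |||(σ−σ_h, u−u_h)|||_{eg,θ} ≤ 2 inf over (τ_h,v_h) ∈ S of |||(σ−τ_h, u−v_h)|||_{full,θ}, with constant 2 independent of ν and θ. -/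
/-!
Write `e = (σ − σ_h, u − u_h) = (χ, w)` and `η = (σ − τ_h, u − v_h) = (τ, v)`. Since `e − η` is
discrete, Galerkin orthogonality gives `B(e, e) = B(e, η)`, and `B(e, e)` is the squared energy norm
(`bInt_self`): the skew-symmetric terms cancel.

To bound `B(e, η)`, the trace of `χ`, which the energy norm does not see, has to be removed from
`2∫⟨ε(v), χ⟩`. Subtracting `2∫ ∇·(χᵀv) = 0` (`integral_dInt`) does this. Splitting all matrices
into symmetric trace-free, skew and spherical parts (`fro_split`), `B(e, η)` becomes a sum of
products of energy components of `e` with combinations such as `ν⁻¹τ − ∇v` or `∇·τ − 2(ν/θ)v`.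
Bounding these combinations termwise would give the constant `√5`; however, after Young's
inequality their squares have mixed terms adding up to `−4(⟨∇v, τ⟩ + v·∇·τ) = −4∇·(τᵀv)`, whose
integral vanishes as well. What remains is at most `4` times the full norm squared, so
`‖e‖² ≤ ½‖e‖² + ½·4‖η‖²`, which is the constant `2`.

All of this is a pointwise inequality up to the divergence `∇·((χ − τ)ᵀv)` (`egInt_le`), which is
integrated over `Ω`. Beyond positivity, the bounds on the
weights enter only through integrability.
-/

open MeasureTheory

noncomputable section

/-! ### Pointwise algebra -/

/-- The normalised trace `tr M / d` (zero when `d = 0`). -/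
def mtr {d : ℕ} (M : Fin d → Fin d → ℝ) : ℝ := (∑ k, M k k) / (d : ℝ)

/-- The symmetric part `(M + Mᵀ)/2`. -/
def symP {d : ℕ} (M : Fin d → Fin d → ℝ) : Fin d → Fin d → ℝ :=
  fun i j => (M i j + M j i) / 2

/-- The skew part `(M − Mᵀ)/2`. -/
def skwP {d : ℕ} (M : Fin d → Fin d → ℝ) : Fin d → Fin d → ℝ :=
  fun i j => (M i j - M j i) / 2

/-- The symmetric trace-free part of a matrix. -/
def sdvP {d : ℕ} (M : Fin d → Fin d → ℝ) : Fin d → Fin d → ℝ :=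
  fun i j => (M i j + M j i) / 2 - mtr M * (if i = j then 1 else 0)

lemma card_mul_mtr {d : ℕ} (M : Fin d → Fin d → ℝ) : (d : ℝ) * mtr M = ∑ k, M k k := by
  rcases Nat.eq_zero_or_pos d with h | h
  · subst h; simp
  · have : (d : ℝ) ≠ 0 := by positivity
    unfold mtr; field_simp

/-- The splitting into symmetric trace-free, skew and spherical parts is Frobenius-orthogonal. -/
lemma fro_split {d : ℕ} (M N : Fin d → Fin d → ℝ) :
    fro M N = (∑ i, ∑ j, (sdvP M i j * sdvP N i j + skwP M i j * skwP N i j))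
      + d * (mtr M * mtr N) := by
  have h1 := card_mul_mtr M
  have h2 := card_mul_mtr N
  have sw : ∀ f : Fin d → Fin d → ℝ, ∑ i, ∑ j, f j i = ∑ i, ∑ j, f i j :=
    fun f => Finset.sum_comm
  have hdiag : ∀ f : Fin d → Fin d → ℝ,
      ∑ i, ∑ j, f i j * (if i = j then (1 : ℝ) else 0) = ∑ i, f i i := by
    intro f; simp
  have e1 : ∀ i j, sdvP M i j * sdvP N i j + skwP M i j * skwP N i j
      = (M i j * N i j) / 2 + (M j i * N j i) / 2
        - (mtr N * ((M i j + M j i) / 2) + mtr M * ((N i j + N j i) / 2)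
            - mtr M * mtr N) * (if i = j then (1 : ℝ) else 0) := by
    intro i j
    unfold sdvP skwP
    split_ifs <;> ring
  simp only [e1, Finset.sum_sub_distrib, Finset.sum_add_distrib, hdiag]
  have e2 := sw (fun i j => (M i j * N i j) / 2)
  simp only [← Finset.sum_div, ← Finset.mul_sum, Finset.sum_add_distrib, Finset.sum_const,
    Finset.card_univ, Fintype.card_fin, nsmul_eq_mul] at e2 ⊢
  rw [e2, ← h1, ← h2]
  unfold fro
  ring

lemma mtr_dev {d : ℕ} (M : Fin d → Fin d → ℝ) : mtr (devM M) = 0 := by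
  have h := card_mul_mtr M
  have : ∑ k, devM M k k = 0 := by
    simp only [devM, Finset.sum_sub_distrib, if_true, mul_one, Finset.sum_const,
      Finset.card_univ, Fintype.card_fin, nsmul_eq_mul]
    unfold mtr at h
    linarith
  simp [mtr, this]

lemma sdv_dev {d : ℕ} (M : Fin d → Fin d → ℝ) : sdvP (devM M) = sdvP M := by
  funext i j
  simp only [sdvP, mtr_dev]
  simp only [devM, mtr, eq_comm (a := j)]
  ring

lemma skw_dev {d : ℕ} (M : Fin d → Fin d → ℝ) : skwP (devM M) = skwP M := by
  funext i j
  simp only [skwP, devM, eq_comm (a := j)]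
  ring

lemma mtr_sym {d : ℕ} (M : Fin d → Fin d → ℝ) : mtr (symP M) = mtr M := by
  simp [mtr, symP]

lemma sdv_sym {d : ℕ} (M : Fin d → Fin d → ℝ) : sdvP (symP M) = sdvP M := by
  funext i j
  simp only [sdvP, mtr_sym]
  simp only [symP]
  ring

lemma skw_sym {d : ℕ} (M : Fin d → Fin d → ℝ) : skwP (symP M) = 0 := by
  funext i j
  simp only [skwP, symP, Pi.zero_apply]
  ring

/-- Integrand of `B_θ` as a function of the values of `(χ, ∇w, ∇·χ)` and `(τ, ∇v, ∇·τ)`. -/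
def bInt {d : ℕ} (n t : ℝ) (X W : Fin d → Fin d → ℝ) (c : Fin d → ℝ)
    (T V : Fin d → Fin d → ℝ) (q : Fin d → ℝ) : ℝ :=
  n⁻¹ * fro (devM X) T - 2 * fro (symP W) T + 2 * fro (symP V) X - fro (devM X) (symP V)
    + fro (devM T) (symP W) + n * fro (symP W) (symP V) + (t / n) * ∑ i, c i * q i

/-- Integrand of the squared energy norm. -/
def egInt {d : ℕ} (n t : ℝ) (X W : Fin d → Fin d → ℝ) (c : Fin d → ℝ) : ℝ :=
  n * fro (symP W) (symP W) + n⁻¹ * fro (devM X) (devM X) + (t / n) * ∑ i, (c i) ^ 2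

/-- Integrand of the squared full norm. -/
def fullInt {d : ℕ} (n t : ℝ) (T V : Fin d → Fin d → ℝ) (q p : Fin d → ℝ) : ℝ :=
  n * fro V V + (n / t) * (∑ i, (p i) ^ 2) + n⁻¹ * fro T T + (t / n) * ∑ i, (q i) ^ 2

/-- The value of `∇·(τᵀ v) = ⟨∇v, τ⟩ + v·(∇·τ)`. -/
def dInt {d : ℕ} (T V : Fin d → Fin d → ℝ) (q p : Fin d → ℝ) : ℝ :=
  fro V T + ∑ i, p i * q i

/-- The boundedness estimate behind the constant `2`. After removing `2 ∇·(χᵀv)` from the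
integrand of `B_θ`, Young's inequality on each orthogonal component produces squares whose mixed
terms add up to exactly `-4 ∇·(τᵀv)`. -/
lemma bInt_le {d : ℕ} (n t : ℝ) (hn : 0 < n) (ht : 0 < t) (X W : Fin d → Fin d → ℝ)
    (c : Fin d → ℝ) (T V : Fin d → Fin d → ℝ) (q p : Fin d → ℝ) :
    2 * bInt n t X W c T V q - 4 * dInt X V c p
      ≤ egInt n t X W c + 4 * fullInt n t T V q p - 4 * dInt T V q p := by
  have hi : 0 < n⁻¹ := inv_pos.2 hn
  -- symmetric trace-free and skew components
  have h1 : 0 ≤ ∑ i, ∑ j,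
      (n⁻¹ * (sdvP X i j - sdvP T i j + n * sdvP V i j) ^ 2
        + n⁻¹ * (n * sdvP W i j - n * sdvP V i j + sdvP T i j) ^ 2
        + 2 * n⁻¹ * sdvP T i j ^ 2 + 2 * n * sdvP V i j ^ 2
        + n⁻¹ * (skwP X i j - skwP T i j + 2 * n * skwP V i j) ^ 2
        + 3 * n⁻¹ * skwP T i j ^ 2) :=
    Finset.sum_nonneg fun i _ => Finset.sum_nonneg fun j _ => by positivity
  -- spherical components
  have h2 : 0 ≤ (d : ℝ) * (n⁻¹ * (n * mtr W - n * mtr V + 2 * mtr T) ^ 2 + 3 * n * mtr V ^ 2) := by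
    positivity
  -- divergence components
  have h3 : 0 ≤ ∑ i, ((t / n) * (c i - q i + 2 * (n / t) * p i) ^ 2 + 3 * (t / n) * q i ^ 2) :=
    Finset.sum_nonneg fun i _ => by positivity
  have e1 : ∀ i j,
      (n⁻¹ * (sdvP X i j - sdvP T i j + n * sdvP V i j) ^ 2
        + n⁻¹ * (n * sdvP W i j - n * sdvP V i j + sdvP T i j) ^ 2
        + 2 * n⁻¹ * sdvP T i j ^ 2 + 2 * n * sdvP V i j ^ 2
        + n⁻¹ * (skwP X i j - skwP T i j + 2 * n * skwP V i j) ^ 2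
        + 3 * n⁻¹ * skwP T i j ^ 2)
      = n⁻¹ * (sdvP X i j * sdvP X i j) + n⁻¹ * (skwP X i j * skwP X i j)
        + n * (sdvP W i j * sdvP W i j)
        + 4 * n * (sdvP V i j * sdvP V i j) + 4 * n * (skwP V i j * skwP V i j)
        + 4 * n⁻¹ * (sdvP T i j * sdvP T i j) + 4 * n⁻¹ * (skwP T i j * skwP T i j)
        - 2 * n⁻¹ * (sdvP X i j * sdvP T i j) + 2 * (sdvP V i j * sdvP X i j)
        - 2 * n⁻¹ * (skwP X i j * skwP T i j) + 4 * (skwP V i j * skwP X i j)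
        - 2 * n * (sdvP W i j * sdvP V i j) + 2 * (sdvP W i j * sdvP T i j)
        - 4 * (sdvP V i j * sdvP T i j) - 4 * (skwP V i j * skwP T i j) := by
    intro i j; field_simp; ring
  have e2 : (d : ℝ) * (n⁻¹ * (n * mtr W - n * mtr V + 2 * mtr T) ^ 2 + 3 * n * mtr V ^ 2)
      = d * (n * (mtr W * mtr W) + 4 * n * (mtr V * mtr V) + 4 * n⁻¹ * (mtr T * mtr T)
        - 2 * n * (mtr W * mtr V) + 4 * (mtr W * mtr T) - 4 * (mtr V * mtr T)) := by
    field_simp; ring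
  have e3 : ∀ i, ((t / n) * (c i - q i + 2 * (n / t) * p i) ^ 2 + 3 * (t / n) * q i ^ 2)
      = (t / n) * c i ^ 2 + 4 * (t / n) * q i ^ 2 + 4 * (n / t) * p i ^ 2
        - 2 * (t / n) * (c i * q i) + 4 * (p i * c i) - 4 * (p i * q i) := by
    intro i; field_simp; ring
  simp only [e1, Finset.sum_add_distrib, Finset.sum_sub_distrib, ← Finset.mul_sum] at h1
  rw [e2] at h2
  simp only [e3, Finset.sum_add_distrib, Finset.sum_sub_distrib, ← Finset.mul_sum] at h3
  have cm : ∀ A B : Fin d → Fin d → ℝ, ∑ i, ∑ j, A i j * B i j = ∑ i, ∑ j, B i j * A i j :=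
    fun A B => by simp only [mul_comm]
  unfold bInt dInt egInt fullInt
  simp only [fro_split, mtr_dev, sdv_dev, skw_dev, mtr_sym, sdv_sym, skw_sym, Pi.zero_apply,
    zero_mul, mul_zero, add_zero, Finset.sum_add_distrib]
  rw [cm (sdvP X) (sdvP V), cm (sdvP T) (sdvP W)]
  linarith

lemma bInt_self {d : ℕ} (n t : ℝ) (X W : Fin d → Fin d → ℝ) (c : Fin d → ℝ) :
    bInt n t X W c X W c = egInt n t X W c := by
  unfold bInt egInt
  simp only [fro_split, mtr_dev, sdv_dev, skw_dev, mtr_sym, sdv_sym, skw_sym, Pi.zero_apply,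
    zero_mul, mul_zero, add_zero, Finset.sum_add_distrib, pow_two]
  ring

lemma fro_sub_left {d : ℕ} (A B C : Fin d → Fin d → ℝ) :
    fro (A - B) C = fro A C - fro B C := by
  simp [fro, sub_mul, Finset.sum_sub_distrib]

lemma fro_sub_right {d : ℕ} (A B C : Fin d → Fin d → ℝ) :
    fro C (A - B) = fro C A - fro C B := by
  simp [fro, mul_sub, Finset.sum_sub_distrib]

lemma symP_sub {d : ℕ} (A B : Fin d → Fin d → ℝ) : symP (A - B) = symP A - symP B := by
  funext i j; simp only [symP, Pi.sub_apply]; ring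

lemma devM_sub {d : ℕ} (A B : Fin d → Fin d → ℝ) : devM (A - B) = devM A - devM B := by
  funext i j; simp only [devM, Pi.sub_apply, Finset.sum_sub_distrib]; ring

/-- The pointwise form of the Céa argument: `e = (X, W, c)` is the error,
`η = (T, V, q, p)` the approximation error, and `e − η` the discrete test direction. -/
lemma egInt_le {d : ℕ} (n t : ℝ) (hn : 0 < n) (ht : 0 < t) (X W : Fin d → Fin d → ℝ)
    (c : Fin d → ℝ) (T V : Fin d → Fin d → ℝ) (q p : Fin d → ℝ) :
    egInt n t X W c ≤ 4 * fullInt n t T V q p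
      + 2 * bInt n t X W c (X - T) (W - V) (c - q) + 4 * dInt (X - T) V (c - q) p := by
  have h := bInt_le n t hn ht X W c T V q p
  have hb : bInt n t X W c (X - T) (W - V) (c - q)
      = bInt n t X W c X W c - bInt n t X W c T V q := by
    unfold bInt
    simp only [symP_sub, devM_sub, fro_sub_left, fro_sub_right, Pi.sub_apply, mul_sub,
      Finset.sum_sub_distrib]
    ring
  have hd : dInt (X - T) V (c - q) p = dInt X V c p - dInt T V q p := by
    unfold dInt
    simp only [fro_sub_right, Pi.sub_apply, mul_sub, Finset.sum_sub_distrib]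
    ring
  rw [hb, hd, bInt_self]
  linarith

/-! ### Square-integrable fields and the divergence theorem -/

/-- The part of admissibility that does not mention the weights: since these are bounded above and
below, the weighted integrals are finite iff the unweighted ones are. Square integrability of
`v` and `∇v` is omitted, being automatic for compactly supported `C¹` fields. -/
structure Good {d : ℕ} (Ω : Set (Fin d → ℝ)) (τ : (Fin d → ℝ) → Fin d → Fin d → ℝ)
    (v : (Fin d → ℝ) → Fin d → ℝ) : Prop where
  cτ : ∀ i j, ContDiffOn ℝ 1 (fun x => τ x i j) Ω
  cv : ContDiff ℝ 1 v
  sv : HasCompactSupport v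
  ssv : tsupport v ⊆ Ω
  mτ : ∀ i j, MemLp (fun x => τ x i j) 2 (volume.restrict Ω)
  mdiv : ∀ i, MemLp (fun x => divT τ x i) 2 (volume.restrict Ω)

lemma pd_contOn {d : ℕ} {Ω : Set (Fin d → ℝ)} (hΩ : IsOpen Ω) {f : (Fin d → ℝ) → ℝ}
    (hf : ContDiffOn ℝ 1 f Ω) (j : Fin d) : ContinuousOn (fun x => pd f x j) Ω :=
  (hf.continuousOn_fderiv_of_isOpen hΩ le_rfl).clm_apply continuousOn_const

lemma divT_contOn {d : ℕ} {Ω : Set (Fin d → ℝ)} (hΩ : IsOpen Ω)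
    {τ : (Fin d → ℝ) → Fin d → Fin d → ℝ} (hτ : ∀ i j, ContDiffOn ℝ 1 (fun x => τ x i j) Ω)
    (i : Fin d) : ContinuousOn (fun x => divT τ x i) Ω :=
  continuousOn_finsetSum _ fun j _ => pd_contOn hΩ (hτ i j) j

lemma memLp_of_weight {d : ℕ} {Ω : Set (Fin d → ℝ)} (hΩ : IsOpen Ω) {f g w : (Fin d → ℝ) → ℝ}
    (hf : ContinuousOn f Ω) {C : ℝ} (hC : 0 < C) (hw : ∀ x ∈ Ω, C ≤ w x)
    (hg : ∀ x ∈ Ω, f x ^ 2 ≤ g x) (hi : IntegrableOn (fun x => w x * g x) Ω) :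
    MemLp f 2 (volume.restrict Ω) := by
  have hm := hf.aestronglyMeasurable (μ := volume) hΩ.measurableSet
  rw [memLp_two_iff_integrable_sq hm]
  refine (hi.const_mul C⁻¹).mono' (hm.pow 2) ?_
  filter_upwards [ae_restrict_mem hΩ.measurableSet] with x hx
  rw [Real.norm_of_nonneg (sq_nonneg _)]
  have h1 := hw x hx
  have h2 := hg x hx
  have h3 : 0 ≤ g x := (sq_nonneg _).trans h2
  calc f x ^ 2 ≤ g x := h2
    _ = C⁻¹ * (C * g x) := by field_simp
    _ ≤ C⁻¹ * (w x * g x) := by gcongr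

lemma Good.sub {d : ℕ} {Ω : Set (Fin d → ℝ)} (hΩ : IsOpen Ω)
    {τ τ' : (Fin d → ℝ) → Fin d → Fin d → ℝ} {v v' : (Fin d → ℝ) → Fin d → ℝ}
    (h : Good Ω τ v) (h' : Good Ω τ' v') :
    Good Ω (τ - τ') (v - v') ∧ (∀ x, jac (v - v') x = jac v x - jac v' x) ∧
      ∀ x ∈ Ω, divT (τ - τ') x = divT τ x - divT τ' x := by
  have hj : ∀ x, jac (v - v') x = jac v x - jac v' x := by
    intro x
    funext i j
    have h1 : DifferentiableAt ℝ (fun y => v y i) x :=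
      ((contDiff_pi.1 h.cv i).differentiable one_ne_zero) x
    have h2 : DifferentiableAt ℝ (fun y => v' y i) x :=
      ((contDiff_pi.1 h'.cv i).differentiable one_ne_zero) x
    simp only [jac, pd, Pi.sub_apply]
    rw [fderiv_fun_sub h1 h2]
    rfl
  have hd : ∀ x ∈ Ω, divT (τ - τ') x = divT τ x - divT τ' x := by
    intro x hx
    funext i
    simp only [divT, pd, Pi.sub_apply, ← Finset.sum_sub_distrib]
    refine Finset.sum_congr rfl fun j _ => ?_
    have h1 := ((h.cτ i j).differentiableOn one_ne_zero).differentiableAt (hΩ.mem_nhds hx)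
    have h2 := ((h'.cτ i j).differentiableOn one_ne_zero).differentiableAt (hΩ.mem_nhds hx)
    rw [fderiv_fun_sub h1 h2]
    rfl
  refine ⟨⟨fun i j => (h.cτ i j).sub (h'.cτ i j), h.cv.sub h'.cv, ?_,
    (tsupport_sub v v').trans (Set.union_subset h.ssv h'.ssv),
    fun i j => (h.mτ i j).sub (h'.mτ i j), fun i => ?_⟩, hj, hd⟩
  · exact (h.sv.isCompact.union h'.sv.isCompact).of_isClosed_subset (isClosed_tsupport _)
      (tsupport_sub v v')
  · refine ((h.mdiv i).sub (h'.mdiv i)).ae_eq ?_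
    filter_upwards [ae_restrict_mem hΩ.measurableSet] with x hx
    simp [hd x hx]

lemma comp_support {d : ℕ} (v : (Fin d → ℝ) → Fin d → ℝ) (i : Fin d) :
    tsupport (fun x => v x i) ⊆ tsupport v :=
  tsupport_comp_subset (g := fun y : Fin d → ℝ => y i) rfl v

lemma Good.mv {d : ℕ} {Ω : Set (Fin d → ℝ)}
    {τ : (Fin d → ℝ) → Fin d → Fin d → ℝ} {v : (Fin d → ℝ) → Fin d → ℝ}
    (h : Good Ω τ v) (i : Fin d) : MemLp (fun x => v x i) 2 (volume.restrict Ω) :=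
  ((contDiff_pi.1 h.cv i).continuous.memLp_of_hasCompactSupport
    (h.sv.of_isClosed_subset (isClosed_tsupport _) (comp_support v i))).restrict Ω

lemma Good.mjac {d : ℕ} {Ω : Set (Fin d → ℝ)}
    {τ : (Fin d → ℝ) → Fin d → Fin d → ℝ} {v : (Fin d → ℝ) → Fin d → ℝ}
    (h : Good Ω τ v) (i j : Fin d) : MemLp (fun x => jac v x i j) 2 (volume.restrict Ω) := by
  have hc : Continuous (fun x => jac v x i j) :=
    ((contDiff_pi.1 h.cv i).continuous_fderiv one_ne_zero).clm_apply continuous_const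
  have hs : HasCompactSupport (fun x => v x i) :=
    h.sv.of_isClosed_subset (isClosed_tsupport _) (comp_support v i)
  exact (hc.memLp_of_hasCompactSupport (hs.fderiv_apply ℝ _)).restrict Ω

/-- A function continuous on `Ω` and vanishing off a compact subset of `Ω` is integrable. -/
lemma integrable_of_compact {d : ℕ} {Ω K : Set (Fin d → ℝ)} (hK : IsCompact K) (hKΩ : K ⊆ Ω)
    {f : (Fin d → ℝ) → ℝ} (hf : ContinuousOn f Ω) (h0 : ∀ x ∉ K, f x = 0) : Integrable f := by
  rw [← integrableOn_iff_integrable_of_support_subset (s := K)]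
  · exact (hf.mono hKΩ).integrableOn_compact hK
  · intro x hx
    by_contra hxK
    exact hx (h0 x hxK)

/-- The divergence theorem for `χᵀ v`, which has compact support in `Ω`; `χ` need only be `C¹`. -/
lemma integral_dInt {d : ℕ} {Ω : Set (Fin d → ℝ)} (hΩ : IsOpen Ω)
    {τ χ : (Fin d → ℝ) → Fin d → Fin d → ℝ} {v : (Fin d → ℝ) → Fin d → ℝ}
    (h : Good Ω τ v) (hχ : ∀ i j, ContDiffOn ℝ 1 (fun x => χ x i j) Ω) :
    ∫ x in Ω, dInt (χ x) (jac v x) (divT χ x) (v x) = 0 := by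
  have hv0 : ∀ i, ∀ x ∉ tsupport v, v x i = 0 := fun i x hx => by
    rw [image_eq_zero_of_notMem_tsupport hx]; rfl
  have hj0 : ∀ i j, ∀ x ∉ tsupport v, jac v x i j = 0 := fun i j x hx => by
    have : x ∉ tsupport (fderiv ℝ (fun y => v y i)) := fun hx' =>
      hx (comp_support v i (tsupport_fderiv_subset ℝ hx'))
    simp only [jac, pd, image_eq_zero_of_notMem_tsupport this]
    rfl
  have hcv : ∀ i, ContDiff ℝ 1 (fun x => v x i) := fun i => contDiff_pi.1 h.cv i
  have hcj : ∀ i j, Continuous (fun x => jac v x i j) := fun i j =>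
    ((hcv i).continuous_fderiv one_ne_zero).clm_apply continuous_const
  have I1 : ∀ i j, Integrable (fun x => jac v x i j * χ x i j) := fun i j =>
    integrable_of_compact h.sv h.ssv ((hcj i j).continuousOn.mul (hχ i j).continuousOn)
      fun x hx => by simp [hj0 i j x hx]
  have I2 : ∀ i j, Integrable (fun x => v x i * pd (fun y => χ y i j) x j) := fun i j =>
    integrable_of_compact h.sv h.ssv
      ((hcv i).continuous.continuousOn.mul (pd_contOn hΩ (hχ i j) j))
      fun x hx => by simp [hv0 i x hx]
  have I3 : ∀ i j, Integrable (fun x => v x i * χ x i j) := fun i j =>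
    integrable_of_compact h.sv h.ssv ((hcv i).continuous.continuousOn.mul (hχ i j).continuousOn)
      fun x hx => by simp [hv0 i x hx]
  have hP : ∀ i j, (∫ x, v x i * pd (fun y => χ y i j) x j) = - ∫ x, jac v x i j * χ x i j :=
    fun i j => integral_mul_fderiv_eq_neg_fderiv_mul_of_integrable (I1 i j) (I2 i j) (I3 i j)
      (fun x _ => (hcv i).differentiable one_ne_zero x)
      (fun x hx => ((hχ i j).differentiableOn one_ne_zero).differentiableAt
        (hΩ.mem_nhds (h.ssv (comp_support v i hx))))
  have I4 : ∀ i j, Integrable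
      (fun x => jac v x i j * χ x i j + v x i * pd (fun y => χ y i j) x j) :=
    fun i j => (I1 i j).add (I2 i j)
  have hrw : ∀ x, dInt (χ x) (jac v x) (divT χ x) (v x)
      = ∑ i, ∑ j, (jac v x i j * χ x i j + v x i * pd (fun y => χ y i j) x j) := by
    intro x
    simp only [dInt, fro, divT, Finset.sum_add_distrib, Finset.mul_sum]
  rw [setIntegral_eq_integral_of_forall_compl_eq_zero]
  · simp only [hrw]
    rw [integral_finsetSum _ fun i _ => integrable_finsetSum _ fun j _ => I4 i j]
    refine Finset.sum_eq_zero fun i _ => ?_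
    rw [integral_finsetSum _ fun j _ => I4 i j]
    refine Finset.sum_eq_zero fun j _ => ?_
    rw [integral_add (I1 i j) (I2 i j), hP]
    ring
  · intro x hx
    have hx' : x ∉ tsupport v := fun hx' => hx (h.ssv hx')
    rw [hrw]
    simp [hv0 _ x hx', hj0 _ _ x hx']

/-! ### Integrability of the integrands -/

lemma integrable_fro {d : ℕ} {μ : Measure (Fin d → ℝ)} {A B : (Fin d → ℝ) → Fin d → Fin d → ℝ}
    (hA : ∀ i j, MemLp (fun x => A x i j) 2 μ) (hB : ∀ i j, MemLp (fun x => B x i j) 2 μ) :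
    Integrable (fun x => fro (A x) (B x)) μ :=
  integrable_finsetSum _ fun i _ => integrable_finsetSum _ fun j _ =>
    (hA i j).integrable_mul (hB i j)

lemma integrable_dot {d : ℕ} {μ : Measure (Fin d → ℝ)} {a b : (Fin d → ℝ) → Fin d → ℝ}
    (ha : ∀ i, MemLp (fun x => a x i) 2 μ) (hb : ∀ i, MemLp (fun x => b x i) 2 μ) :
    Integrable (fun x => ∑ i, a x i * b x i) μ :=
  integrable_finsetSum _ fun i _ => (ha i).integrable_mul (hb i)

lemma memLp_dev {d : ℕ} {μ : Measure (Fin d → ℝ)} {A : (Fin d → ℝ) → Fin d → Fin d → ℝ}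
    (hA : ∀ i j, MemLp (fun x => A x i j) 2 μ) (i j : Fin d) :
    MemLp (fun x => devM (A x) i j) 2 μ := by
  have hs : MemLp (fun x => ∑ k, A x k k) 2 μ := memLp_finsetSum _ fun k _ => hA k k
  have := (hA i j).sub (hs.const_mul ((d : ℝ)⁻¹ * (if i = j then 1 else 0)))
  convert this using 2 with x
  simp only [devM, Pi.sub_apply]
  ring

lemma memLp_sym {d : ℕ} {μ : Measure (Fin d → ℝ)} {A : (Fin d → ℝ) → Fin d → Fin d → ℝ}
    (hA : ∀ i j, MemLp (fun x => A x i j) 2 μ) (i j : Fin d) :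
    MemLp (fun x => symP (A x) i j) 2 μ := by
  have := ((hA i j).add (hA j i)).const_mul (2 : ℝ)⁻¹
  convert this using 2 with x
  simp only [symP, Pi.add_apply]
  ring

lemma integrable_weight {d : ℕ} {Ω : Set (Fin d → ℝ)} (hΩ : IsOpen Ω) {w f : (Fin d → ℝ) → ℝ}
    (hw : Measurable w) {C : ℝ} (hC : ∀ x ∈ Ω, |w x| ≤ C)
    (hf : Integrable f (volume.restrict Ω)) :
    Integrable (fun x => w x * f x) (volume.restrict Ω) :=
  hf.bdd_mul hw.aestronglyMeasurable <| by
    filter_upwards [ae_restrict_mem hΩ.measurableSet] with x hx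
    exact hC x hx

/-- The weights `ν`, `ν⁻¹`, `ν/θ`, `θ/ν` act boundedly on integrable functions on `Ω`. -/
structure Weights {d : ℕ} (Ω : Set (Fin d → ℝ)) (ν θ : (Fin d → ℝ) → ℝ) : Prop where
  w1 : ∀ f, Integrable f (volume.restrict Ω) →
    Integrable (fun x => ν x * f x) (volume.restrict Ω)
  w2 : ∀ f, Integrable f (volume.restrict Ω) →
    Integrable (fun x => (ν x)⁻¹ * f x) (volume.restrict Ω)
  w3 : ∀ f, Integrable f (volume.restrict Ω) →
    Integrable (fun x => (ν x / θ x) * f x) (volume.restrict Ω)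
  w4 : ∀ f, Integrable f (volume.restrict Ω) →
    Integrable (fun x => (θ x / ν x) * f x) (volume.restrict Ω)

lemma weights_of_bounds {d : ℕ} {Ω : Set (Fin d → ℝ)} (hΩ : IsOpen Ω)
    {ν θ : (Fin d → ℝ) → ℝ} (hνmeas : Measurable ν) (hθmeas : Measurable θ)
    {lam Lam θ₀ θ₁ : ℝ} (hlam : 0 < lam) (hνbd : ∀ x ∈ Ω, lam ≤ ν x ∧ ν x ≤ Lam)
    (hθ₀ : 0 < θ₀) (hθbd : ∀ x ∈ Ω, θ₀ ≤ θ x ∧ θ x ≤ θ₁) : Weights Ω ν θ := by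
  have key : ∀ x ∈ Ω, 0 < ν x ∧ 0 < θ x := fun x hx =>
    ⟨hlam.trans_le (hνbd x hx).1, hθ₀.trans_le (hθbd x hx).1⟩
  refine ⟨fun f => integrable_weight hΩ (C := Lam) hνmeas fun x hx => ?_,
    fun f => integrable_weight hΩ (C := lam⁻¹) hνmeas.inv fun x hx => ?_,
    fun f => integrable_weight hΩ (C := Lam / θ₀) (hνmeas.div hθmeas) fun x hx => ?_,
    fun f => integrable_weight hΩ (C := θ₁ / lam) (hθmeas.div hνmeas) fun x hx => ?_⟩
  all_goals
    obtain ⟨h1, h2⟩ := hνbd x hx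
    obtain ⟨h3, h4⟩ := hθbd x hx
    obtain ⟨h5, h6⟩ := key x hx
  · rwa [abs_of_pos h5]
  · rw [abs_of_pos (inv_pos.2 h5)]
    gcongr
  · rw [abs_of_pos (div_pos h5 h6)]
    have : 0 ≤ Lam := h5.le.trans h2
    gcongr
  · rw [abs_of_pos (div_pos h6 h5)]
    have : 0 ≤ θ₁ := h6.le.trans h4
    gcongr

lemma good_of_admissible {d : ℕ} {Ω : Set (Fin d → ℝ)} (hΩ : IsOpen Ω)
    {ν θ : (Fin d → ℝ) → ℝ}
    {lam Lam θ₀ θ₁ : ℝ} (hlam : 0 < lam) (hνbd : ∀ x ∈ Ω, lam ≤ ν x ∧ ν x ≤ Lam)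
    (hθ₀ : 0 < θ₀) (hθbd : ∀ x ∈ Ω, θ₀ ≤ θ x ∧ θ x ≤ θ₁)
    {τ : (Fin d → ℝ) → Fin d → Fin d → ℝ} {v : (Fin d → ℝ) → Fin d → ℝ}
    (h : Admissible Ω ν θ τ v) : Good Ω τ v := by
  obtain ⟨h1, h2, h3, h4, h5, -, -, h8⟩ := h
  -- the upper bound `Lam` could be nonpositive only if `Ω` is empty; `max Lam 1` avoids the case
  have hM : (0 : ℝ) < max Lam 1 := lt_max_of_lt_right one_pos
  have hν : ∀ x ∈ Ω, 0 < ν x ∧ ν x ≤ max Lam 1 := fun x hx =>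
    ⟨hlam.trans_le (hνbd x hx).1, (hνbd x hx).2.trans (le_max_left _ _)⟩
  refine ⟨h1, h2, h3, h4, fun i j => ?_, fun i => ?_⟩
  · refine memLp_of_weight hΩ (h1 i j).continuousOn (C := (max Lam 1)⁻¹) (inv_pos.2 hM)
      (fun x hx => ?_) (fun x _ => ?_) h5
    · obtain ⟨a, b⟩ := hν x hx
      gcongr
    · have e1 : τ x i j ^ 2 ≤ ∑ j, τ x i j ^ 2 :=
        Finset.single_le_sum (f := fun j => τ x i j ^ 2) (fun _ _ => sq_nonneg _)
          (Finset.mem_univ j)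
      have e2 : ∑ j, τ x i j ^ 2 ≤ ∑ i, ∑ j, τ x i j ^ 2 :=
        Finset.single_le_sum (f := fun i => ∑ j, τ x i j ^ 2)
          (fun _ _ => Finset.sum_nonneg fun _ _ => sq_nonneg _) (Finset.mem_univ i)
      simpa only [fro, pow_two] using e1.trans e2
  · refine memLp_of_weight hΩ (divT_contOn hΩ h1 i) (C := θ₀ / max Lam 1) (div_pos hθ₀ hM)
      (fun x hx => ?_) (fun x _ => ?_) h8
    · obtain ⟨a, b⟩ := hν x hx
      have c := (hθbd x hx).1
      have : 0 ≤ θ x := hθ₀.le.trans c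
      gcongr
    · exact Finset.single_le_sum (f := fun i => divT τ x i ^ 2) (fun _ _ => sq_nonneg _)
        (Finset.mem_univ i)

lemma Bform_eq {d : ℕ} {Ω : Set (Fin d → ℝ)} {ν θ : (Fin d → ℝ) → ℝ} (hw : Weights Ω ν θ)
    {χ τ : (Fin d → ℝ) → Fin d → Fin d → ℝ} {w v : (Fin d → ℝ) → Fin d → ℝ}
    (he : Good Ω χ w) (hz : Good Ω τ v) :
    Integrable (fun x => bInt (ν x) (θ x) (χ x) (jac w x) (divT χ x)
        (τ x) (jac v x) (divT τ x)) (volume.restrict Ω) ∧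
      Bform Ω ν θ χ w τ v = ∫ x in Ω, bInt (ν x) (θ x) (χ x) (jac w x) (divT χ x)
        (τ x) (jac v x) (divT τ x) := by
  have i1 := hw.w2 _ (integrable_fro (memLp_dev he.mτ) hz.mτ)
  have i2 := (integrable_fro (memLp_sym he.mjac) hz.mτ).const_mul 2
  have i3 := (integrable_fro (memLp_sym hz.mjac) he.mτ).const_mul 2
  have i4 := integrable_fro (memLp_dev he.mτ) (memLp_sym hz.mjac)
  have i5 := integrable_fro (memLp_dev hz.mτ) (memLp_sym he.mjac)
  have i6 := hw.w1 _ (integrable_fro (memLp_sym he.mjac) (memLp_sym hz.mjac))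
  have i7 := hw.w4 _ (integrable_dot he.mdiv hz.mdiv)
  have j2 := i1.sub i2
  have j3 := j2.add i3
  have j4 := j3.sub i4
  have j5 := j4.add i5
  have j6 := j5.add i6
  refine ⟨j6.add i7, ?_⟩
  have e := integral_add' j6 i7
  rw [integral_add' j5 i6, integral_add' j4 i5, integral_sub' j3 i4,
    integral_add' j2 i3, integral_sub' i1 i2, integral_const_mul, integral_const_mul] at e
  exact e.symm

lemma normEg_eq {d : ℕ} {Ω : Set (Fin d → ℝ)} {ν θ : (Fin d → ℝ) → ℝ} (hw : Weights Ω ν θ)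
    {χ : (Fin d → ℝ) → Fin d → Fin d → ℝ} {w : (Fin d → ℝ) → Fin d → ℝ} (he : Good Ω χ w) :
    Integrable (fun x => egInt (ν x) (θ x) (χ x) (jac w x) (divT χ x)) (volume.restrict Ω) ∧
      normEg Ω ν θ χ w
        = Real.sqrt (∫ x in Ω, egInt (ν x) (θ x) (χ x) (jac w x) (divT χ x)) := by
  have i1 := hw.w1 _ (integrable_fro (memLp_sym he.mjac) (memLp_sym he.mjac))
  have i2 := hw.w2 _ (integrable_fro (memLp_dev he.mτ) (memLp_dev he.mτ))
  have i3 := hw.w4 _ (integrable_dot he.mdiv he.mdiv)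
  simp only [← pow_two] at i3
  have j2 := i1.add i2
  refine ⟨j2.add i3, ?_⟩
  have e := integral_add' j2 i3
  rw [integral_add' i1 i2] at e
  exact congrArg Real.sqrt e.symm

lemma normFull_eq {d : ℕ} {Ω : Set (Fin d → ℝ)} {ν θ : (Fin d → ℝ) → ℝ} (hw : Weights Ω ν θ)
    {τ : (Fin d → ℝ) → Fin d → Fin d → ℝ} {v : (Fin d → ℝ) → Fin d → ℝ} (hη : Good Ω τ v) :
    Integrable (fun x => fullInt (ν x) (θ x) (τ x) (jac v x) (divT τ x) (v x))
        (volume.restrict Ω) ∧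
      normFull Ω ν θ τ v
        = Real.sqrt (∫ x in Ω, fullInt (ν x) (θ x) (τ x) (jac v x) (divT τ x) (v x)) := by
  have i1 := hw.w1 _ (integrable_fro hη.mjac hη.mjac)
  have i2 := hw.w3 _ (integrable_dot hη.mv hη.mv)
  have i3 := hw.w2 _ (integrable_fro hη.mτ hη.mτ)
  have i4 := hw.w4 _ (integrable_dot hη.mdiv hη.mdiv)
  simp only [← pow_two] at i2 i4
  have j2 := i1.add i2
  have j3 := j2.add i3
  refine ⟨j3.add i4, ?_⟩
  have e := integral_add' j3 i4
  rw [integral_add' j2 i3, integral_add' i1 i2] at e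
  exact congrArg Real.sqrt e.symm

/-- Robust Céa-type estimate, Theorem 6.1: under Galerkin
orthogonality on an ℝ-linear subspace `S` of admissible pairs,
`|||(σ−σ_h, u−u_h)|||_{eg,θ} ≤ 2 |||(σ−τ_h, u−v_h)|||_{full,θ}` for every
`(τ_h,v_h) ∈ S`, and hence the error is bounded by twice the infimum. -/
theorem stmt_11 (d : ℕ) (Ω : Set (Fin d → ℝ)) (hΩ : IsOpen Ω)
    (ν θ : (Fin d → ℝ) → ℝ) (hνmeas : Measurable ν) (hθmeas : Measurable θ)
    (lam Lam θ₀ θ₁ : ℝ) (hlam : 0 < lam) (hνbd : ∀ x ∈ Ω, lam ≤ ν x ∧ ν x ≤ Lam)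
    (hθ₀ : 0 < θ₀) (hθbd : ∀ x ∈ Ω, θ₀ ≤ θ x ∧ θ x ≤ θ₁)
    (S : Submodule ℝ (((Fin d → ℝ) → Fin d → Fin d → ℝ) × ((Fin d → ℝ) → Fin d → ℝ)))
    (hS : ∀ p ∈ S, Admissible Ω ν θ p.1 p.2)
    (σ : (Fin d → ℝ) → Fin d → Fin d → ℝ) (u : (Fin d → ℝ) → Fin d → ℝ)
    (hσu : Admissible Ω ν θ σ u)
    (sh : ((Fin d → ℝ) → Fin d → Fin d → ℝ) × ((Fin d → ℝ) → Fin d → ℝ))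
    (hsh : sh ∈ S)
    (hGalerkin : ∀ p ∈ S, Bform Ω ν θ (σ - sh.1) (u - sh.2) p.1 p.2 = 0) :
    (∀ p ∈ S, normEg Ω ν θ (σ - sh.1) (u - sh.2) ≤
        2 * normFull Ω ν θ (σ - p.1) (u - p.2)) ∧
      normEg Ω ν θ (σ - sh.1) (u - sh.2) ≤
        2 * ⨅ p : S, normFull Ω ν θ (σ - (p : ((Fin d → ℝ) → Fin d → Fin d → ℝ) × ((Fin d → ℝ) → Fin d → ℝ)).1) (u - (p : ((Fin d → ℝ) → Fin d → Fin d → ℝ) × ((Fin d → ℝ) → Fin d → ℝ)).2) := by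
  have hw := weights_of_bounds hΩ hνmeas hθmeas hlam hνbd hθ₀ hθbd
  have good := fun τ v => good_of_admissible (τ := τ) (v := v) hΩ hlam hνbd hθ₀ hθbd
  have gσ := good _ _ hσu
  have gs := good _ _ (hS sh hsh)
  obtain ⟨ge, je, de⟩ := gσ.sub hΩ gs
  obtain ⟨iE, nE⟩ := normEg_eq hw ge
  have main : ∀ p ∈ S, normEg Ω ν θ (σ - sh.1) (u - sh.2) ≤
      2 * normFull Ω ν θ (σ - p.1) (u - p.2) := by
    intro p hp
    have gp := good _ _ (hS p hp)
    obtain ⟨gη, jη, dη⟩ := gσ.sub hΩ gp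
    obtain ⟨gz, jz, dz⟩ := gp.sub hΩ gs
    obtain ⟨iF, nF⟩ := normFull_eq hw gη
    obtain ⟨iB, nB⟩ := Bform_eq hw ge gz
    have hB := hGalerkin (p - sh) (S.sub_mem hp hsh)
    simp only [Prod.fst_sub, Prod.snd_sub] at hB
    rw [nB] at hB
    have hD := integral_dInt hΩ gη gz.cτ
    have iD : Integrable (fun x => dInt ((p.1 - sh.1) x) (jac (u - p.2) x)
        (divT (p.1 - sh.1) x) ((u - p.2) x)) (volume.restrict Ω) :=
      (integrable_fro gη.mjac gz.mτ).add (integrable_dot gη.mv gz.mdiv)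
    have j1 := (iF.const_mul 4).add (iB.const_mul 2)
    have hle := integral_mono_ae iE (j1.add (iD.const_mul 4)) (by
      filter_upwards [ae_restrict_mem hΩ.measurableSet] with x hx
      have h := egInt_le (ν x) (θ x) (hlam.trans_le (hνbd x hx).1) (hθ₀.trans_le (hθbd x hx).1)
        ((σ - sh.1) x) (jac (u - sh.2) x) (divT (σ - sh.1) x)
        ((σ - p.1) x) (jac (u - p.2) x) (divT (σ - p.1) x) ((u - p.2) x)
      -- the error minus the approximation error is the discrete pair `p - sh`
      have e1 : (σ - sh.1) x - (σ - p.1) x = (p.1 - sh.1) x := by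
        simp only [Pi.sub_apply]; abel
      have e2 : jac (u - sh.2) x - jac (u - p.2) x = jac (p.2 - sh.2) x := by
        rw [je, jη, jz]; abel
      have e3 : divT (σ - sh.1) x - divT (σ - p.1) x = divT (p.1 - sh.1) x := by
        rw [de x hx, dη x hx, dz x hx]; abel
      rw [e1, e2, e3] at h
      exact h)
    rw [integral_add' j1 (iD.const_mul 4), integral_add' (iF.const_mul 4) (iB.const_mul 2),
      integral_const_mul, integral_const_mul, integral_const_mul, hB, hD] at hle
    rw [nE, nF]
    have h4 : (2 : ℝ) = Real.sqrt 4 := by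
      rw [show (4 : ℝ) = 2 ^ 2 by norm_num, Real.sqrt_sq (by norm_num)]
    rw [h4, ← Real.sqrt_mul (by norm_num)]
    exact Real.sqrt_le_sqrt (by linarith)
  refine ⟨main, ?_⟩
  have : normEg Ω ν θ (σ - sh.1) (u - sh.2) / 2 ≤ ⨅ p : S, normFull Ω ν θ (σ - p.1.1) (u - p.1.2) :=
    le_ciInf fun p => by linarith [main p.1 p.2]
  linarith
end
end
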